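/- Let A ∈ ℝ^{m×n} with m ≤ n and largest singular value σ₁, and suppose ε > σ₁². Then the spectral norm of the m×n matrix A(AᵀA + εI)^{−1} equals σ₁/(ε + σ₁²), i.e., ‖A(AᵀA + εI)^{−1}‖₂ = σ₁/(ε + σ₁²). -/

import Mathlib

/-!
Write `M = AᵀA + εI` and, for a vector `y`, set `a = ‖y‖²`, `b = ‖Ay‖²`, `c = ‖AᵀAy‖²`. Then
`‖My‖² = c + 2εb + ε²a`, while Cauchy–Schwarz gives `b² ≤ ac` and the definition of `σ = σ₁` gives
`b ≤ σ²a`. Substituting `y = M⁻¹x`, the bound to prove is `(ε + σ²)² b ≤ σ²(c + 2εb + ε²a)`, and it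
follows from
`a (σ²(c + 2εb + ε²a) - (ε + σ²)² b) ≥ (σ²a - b)(ε²a - σ²b) ≥ 0`,
where the last factor is nonnegative because `σ²b ≤ σ⁴a ≤ ε²a`; this is where `ε > σ²` enters.

If `v ≠ 0` attains `‖Av‖ = σ‖v‖`, then `c = σ²b` (one inequality is Cauchy–Schwarz, the other is
`‖Aᵀu‖ ≤ σ‖u‖`), so `‖Mv‖ = (ε + σ²)‖v‖` and the bound is attained at `x = Mv`.
-/

open Matrix Filter Topology

/-- Euclidean (ℓ₂) norm of a vector in ℝ^n. -/
noncomputable def norm2 {n : ℕ} (x : Fin n → ℝ) : ℝ := Real.sqrt (∑ i, x i ^ 2)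

/-- Euclidean inner product. -/
def dot {n : ℕ} (u v : Fin n → ℝ) : ℝ := ∑ i, u i * v i

/-- Support of a vector. -/
def supp {n : ℕ} (x : Fin n → ℝ) : Set (Fin n) := {i | x i ≠ 0}

/-- δ ∈ (0,1) is a restricted isometry constant of order q for A. -/
def IsRIC {m n : ℕ} (A : Matrix (Fin m) (Fin n) ℝ) (q : ℕ) (δ : ℝ) : Prop :=
  0 < δ ∧ δ < 1 ∧
    ∀ x : Fin n → ℝ, (supp x).ncard ≤ q →
      (1 - δ) * norm2 x ^ 2 ≤ norm2 (A.mulVec x) ^ 2 ∧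
      norm2 (A.mulVec x) ^ 2 ≤ (1 + δ) * norm2 x ^ 2

/-- σ is the largest singular value (spectral norm) of A: it bounds ‖Av‖₂/‖v‖₂
and this bound is attained. -/
def IsMaxSingularValue {m n : ℕ} (A : Matrix (Fin m) (Fin n) ℝ) (σ : ℝ) : Prop :=
  0 ≤ σ ∧ (∀ v : Fin n → ℝ, norm2 (A.mulVec v) ≤ σ * norm2 v) ∧
    ∃ v : Fin n → ℝ, v ≠ 0 ∧ norm2 (A.mulVec v) = σ * norm2 v

/-- For m ≤ n, σ is the smallest singular value of A, i.e. σ² is the smallest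
eigenvalue of A Aᵀ: σ is the infimum of ‖Aᵀu‖₂/‖u‖₂ and it is attained. -/
def IsMinSingularValue {m n : ℕ} (A : Matrix (Fin m) (Fin n) ℝ) (σ : ℝ) : Prop :=
  0 ≤ σ ∧ (∀ u : Fin m → ℝ, σ * norm2 u ≤ norm2 (Aᵀ.mulVec u)) ∧
    ∃ u : Fin m → ℝ, u ≠ 0 ∧ norm2 (Aᵀ.mulVec u) = σ * norm2 u

/-- w is a hard k-thresholding of z with associated index set S*. -/
def IsHardThresholding {n : ℕ} (k : ℕ) (z w : Fin n → ℝ) (S : Set (Fin n)) : Prop :=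
  S.ncard = k ∧ (∀ i ∈ S, w i = z i) ∧ (∀ i ∉ S, w i = 0) ∧
    ∀ i ∈ S, ∀ j ∉ S, |z j| ≤ |z i|

lemma norm2_nonneg {n : ℕ} (x : Fin n → ℝ) : 0 ≤ norm2 x := Real.sqrt_nonneg _

lemma norm2_sq {n : ℕ} (x : Fin n → ℝ) : norm2 x ^ 2 = x ⬝ᵥ x := by
  rw [norm2, Real.sq_sqrt (Finset.sum_nonneg fun i _ => sq_nonneg _)]
  simp [dotProduct, pow_two]

lemma dotProduct_sq_le {n : ℕ} (x y : Fin n → ℝ) :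
    (x ⬝ᵥ y) ^ 2 ≤ norm2 x ^ 2 * norm2 y ^ 2 := by
  rw [norm2_sq, norm2_sq]
  have h := Finset.sum_mul_sq_le_sq_mul_sq Finset.univ x y
  simpa [dotProduct, pow_two] using h

lemma norm2_sq_pos {n : ℕ} {x : Fin n → ℝ} (hx : x ≠ 0) : 0 < norm2 x ^ 2 := by
  refine lt_of_le_of_ne (sq_nonneg _) fun h => hx ?_
  rw [norm2_sq] at h
  exact dotProduct_self_eq_zero.mp h.symm

lemma dotProduct_gram {m n : ℕ} (A : Matrix (Fin m) (Fin n) ℝ) (x y : Fin n → ℝ) :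
    x ⬝ᵥ ((Aᵀ * A) *ᵥ y) = (A *ᵥ x) ⬝ᵥ (A *ᵥ y) := by
  rw [← mulVec_mulVec, dotProduct_mulVec, vecMul_transpose]

lemma norm2_sq_regularized {m n : ℕ} (A : Matrix (Fin m) (Fin n) ℝ) (ε : ℝ) (y : Fin n → ℝ) :
    norm2 ((Aᵀ * A + ε • (1 : Matrix (Fin n) (Fin n) ℝ)) *ᵥ y) ^ 2 =
      norm2 ((Aᵀ * A) *ᵥ y) ^ 2 + 2 * ε * norm2 (A *ᵥ y) ^ 2 + ε ^ 2 * norm2 y ^ 2 := by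
  have h := dotProduct_gram A y y
  have h' := dotProduct_comm ((Aᵀ * A) *ᵥ y) y
  simp only [norm2_sq, add_mulVec, smul_mulVec, one_mulVec, add_dotProduct, dotProduct_add,
    smul_dotProduct, dotProduct_smul, smul_eq_mul]
  rw [h', h]
  ring

lemma norm2_mulVec_pow_four_le {m n : ℕ} (A : Matrix (Fin m) (Fin n) ℝ) (y : Fin n → ℝ) :
    (norm2 (A *ᵥ y) ^ 2) ^ 2 ≤ norm2 y ^ 2 * norm2 ((Aᵀ * A) *ᵥ y) ^ 2 := by
  rw [norm2_sq (A *ᵥ y), ← dotProduct_gram]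
  exact dotProduct_sq_le _ _

/-- An upper bound `σ` for the operator norm of `A` also bounds `Aᵀ`, here on the range of `A`. -/
lemma norm2_gram_sq_le {m n : ℕ} {A : Matrix (Fin m) (Fin n) ℝ} {σ : ℝ}
    (h : ∀ v : Fin n → ℝ, norm2 (A *ᵥ v) ^ 2 ≤ σ ^ 2 * norm2 v ^ 2) (y : Fin n → ℝ) :
    norm2 ((Aᵀ * A) *ᵥ y) ^ 2 ≤ σ ^ 2 * norm2 (A *ᵥ y) ^ 2 := by
  set w := (Aᵀ * A) *ᵥ y with hw
  have h1 : (norm2 w ^ 2) ^ 2 ≤ norm2 (A *ᵥ w) ^ 2 * norm2 (A *ᵥ y) ^ 2 := by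
    have e : norm2 w ^ 2 = (A *ᵥ w) ⬝ᵥ (A *ᵥ y) := by
      rw [← dotProduct_gram, ← hw, norm2_sq]
    rw [e]
    exact dotProduct_sq_le _ _
  have h2 := mul_le_mul_of_nonneg_right (h w) (sq_nonneg (norm2 (A *ᵥ y)))
  rcases (sq_nonneg (norm2 w)).eq_or_lt with h0 | h0
  · rw [← h0]; positivity
  · refine le_of_mul_le_mul_left ?_ h0
    nlinarith

lemma isUnit_regularized {m n : ℕ} (A : Matrix (Fin m) (Fin n) ℝ) {ε : ℝ} (hε : 0 < ε) :
    IsUnit (Aᵀ * A + ε • (1 : Matrix (Fin n) (Fin n) ℝ)) := by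
  have h1 : (Aᵀ * A).PosSemidef := by
    simpa using posSemidef_conjTranspose_mul_self A
  exact (PosDef.posSemidef_add h1 (PosDef.one.smul hε)).isUnit

lemma norm2_sq_bound {m n : ℕ} {A : Matrix (Fin m) (Fin n) ℝ} {σ ε : ℝ}
    (h : ∀ v : Fin n → ℝ, norm2 (A *ᵥ v) ^ 2 ≤ σ ^ 2 * norm2 v ^ 2) (hε : σ ^ 2 < ε)
    (y : Fin n → ℝ) :
    (ε + σ ^ 2) ^ 2 * norm2 (A *ᵥ y) ^ 2 ≤
      σ ^ 2 * norm2 ((Aᵀ * A + ε • (1 : Matrix (Fin n) (Fin n) ℝ)) *ᵥ y) ^ 2 := by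
  rw [norm2_sq_regularized]
  have hb := h y
  have hcs := norm2_mulVec_pow_four_le A y
  have hb0 := sq_nonneg (norm2 (A *ᵥ y))
  have hc0 := sq_nonneg (norm2 ((Aᵀ * A) *ᵥ y))
  have ha0 := sq_nonneg (norm2 y)
  have hs0 := sq_nonneg σ
  generalize norm2 (A *ᵥ y) ^ 2 = b at *
  generalize norm2 ((Aᵀ * A) *ᵥ y) ^ 2 = c at *
  generalize norm2 y ^ 2 = a at *
  generalize σ ^ 2 = s at *
  rcases ha0.eq_or_lt with h0 | h0
  · have hb' : b = 0 := by subst h0; linarith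
    subst h0 hb'
    have := mul_nonneg hs0 hc0
    linarith
  · have hε0 : 0 ≤ ε := by linarith
    have h1 : s * b ≤ s * (s * a) := mul_le_mul_of_nonneg_left hb hs0
    have h2 : s * s * a ≤ ε * ε * a := by gcongr
    have h3 : 0 ≤ (s * a - b) * (ε * ε * a - s * b) :=
      mul_nonneg (by linarith) (by linarith)
    have h4 := mul_le_mul_of_nonneg_left hcs hs0
    refine le_of_mul_le_mul_left ?_ h0
    linarith

/-- the spectral norm of A(AᵀA + εI)⁻¹ equals σ₁/(ε + σ₁²). -/
theorem stmt_9 {m n : ℕ} (hmn : m ≤ n) (A : Matrix (Fin m) (Fin n) ℝ)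
    (σ1 : ℝ) (hσ1 : IsMaxSingularValue A σ1)
    (ε : ℝ) (hε : σ1 ^ 2 < ε) :
    IsMaxSingularValue (A * (Aᵀ * A + ε • (1 : Matrix (Fin n) (Fin n) ℝ))⁻¹)
      (σ1 / (ε + σ1 ^ 2)) := by
  obtain ⟨hs, hle, v, hv, hveq⟩ := hσ1
  have hε0 : 0 < ε := lt_of_le_of_lt (sq_nonneg _) hε
  have hd : 0 < ε + σ1 ^ 2 := by positivity
  have hsq : ∀ v : Fin n → ℝ, norm2 (A *ᵥ v) ^ 2 ≤ σ1 ^ 2 * norm2 v ^ 2 := fun v => by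
    rw [← mul_pow]
    exact pow_le_pow_left₀ (norm2_nonneg _) (hle v) 2
  have hdet := (isUnit_iff_isUnit_det _).mp (isUnit_regularized A hε0)
  have hreg := norm2_sq_regularized A ε v
  have hbound := norm2_sq_bound hsq hε
  set M := Aᵀ * A + ε • (1 : Matrix (Fin n) (Fin n) ℝ) with hM
  refine ⟨by positivity, fun x => ?_, M *ᵥ v, ?_, ?_⟩
  · have hx : M *ᵥ (M⁻¹ *ᵥ x) = x := by
      rw [mulVec_mulVec, mul_nonsing_inv _ hdet, one_mulVec]
    have h := hbound (M⁻¹ *ᵥ x)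
    rw [hx, ← mul_pow, ← mul_pow] at h
    have h' := (pow_le_pow_iff_left₀ (mul_nonneg hd.le (norm2_nonneg _))
      (mul_nonneg hs (norm2_nonneg _)) two_ne_zero).mp h
    rw [← mulVec_mulVec, div_mul_eq_mul_div, le_div_iff₀ hd]
    linarith
  · intro h0
    apply hv
    rw [← one_mulVec v, ← nonsing_inv_mul _ hdet, ← mulVec_mulVec, h0, mulVec_zero]
  · have hb : norm2 (A *ᵥ v) ^ 2 = σ1 ^ 2 * norm2 v ^ 2 := by rw [hveq, mul_pow]
    have hc : norm2 ((Aᵀ * A) *ᵥ v) ^ 2 = σ1 ^ 2 * (σ1 ^ 2 * norm2 v ^ 2) := by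
      apply le_antisymm
      · rw [← hb]
        exact norm2_gram_sq_le hsq v
      · have h := norm2_mulVec_pow_four_le A v
        rw [hb] at h
        refine le_of_mul_le_mul_left ?_ (norm2_sq_pos hv)
        linarith
    have hMv : norm2 (M *ᵥ v) = (ε + σ1 ^ 2) * norm2 v := by
      refine (pow_left_inj₀ (norm2_nonneg _) (mul_nonneg hd.le (norm2_nonneg _)) two_ne_zero).mp ?_
      rw [hreg, hb, hc]
      ring
    rw [mulVec_mulVec, Matrix.mul_assoc, nonsing_inv_mul _ hdet, Matrix.mul_one, hMv, hveq]
    field_simp
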